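/- For every τ₀ > 0 there exists a constant C₀ ∈ (0,1] such that for every continuous nonnegative function φ : [0,∞) → ℝ and all t > 0 and r > τ₀/2 with |t − r| > τ₀/8: I(t,r,φ) ≥ (C₀/√(sinh r)) ∫_{|t−r|}^{t+r} φ(λ) √(sinh λ) dλ. -/

import Mathlib

open MeasureTheory intervalIntegral

/-- The radial form, at geodesic radius `r` and time `t`, of the solution of the shifted
wave equation on the hyperbolic plane with data `u(0) = 0`, `∂ₜu(0) = φ`. -/
noncomputable def Isol (t r : ℝ) (φ : ℝ → ℝ) : ℝ :=
  (1 / (Real.pi * Real.sqrt 2)) *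
    ∫ s in (0 : ℝ)..t, ∫ l in |r - s|..(r + s),
      φ l * Real.sinh l * Real.sinh s *
        ((Real.cosh t - Real.cosh s) * (Real.cosh (r + s) - Real.cosh l) *
          (Real.cosh l - Real.cosh (r - s))) ^ (-(1 / 2) : ℝ)

lemma rpow_neg_half_eq_inv_sqrt {x : ℝ} (hx : 0 ≤ x) : x ^ (-(1 / 2) : ℝ) = (√x)⁻¹ := by
  rw [Real.rpow_neg hx, Real.sqrt_eq_rpow]

lemma cosh_lt_cosh_of_nonneg {p q : ℝ} (hp : 0 ≤ p) (hpq : p < q) :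
    Real.cosh p < Real.cosh q :=
  Real.cosh_strictMonoOn hp (hp.trans hpq.le) hpq

/-- The arcsine integral, in the variable `cosh s`. -/
lemma integral_sinh_div_sqrt_cosh {p q : ℝ} (hp : 0 ≤ p) (hpq : p < q) :
    IntegrableOn (fun s => Real.sinh s *
      (√((Real.cosh q - Real.cosh s) * (Real.cosh s - Real.cosh p)))⁻¹) (Set.Ioo p q) ∧
    ∫ s in Set.Ioo p q, Real.sinh s *
      (√((Real.cosh q - Real.cosh s) * (Real.cosh s - Real.cosh p)))⁻¹ = Real.pi := by
  have hD : 0 < Real.cosh q - Real.cosh p := sub_pos.2 (cosh_lt_cosh_of_nonneg hp hpq)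
  set D := Real.cosh q - Real.cosh p with hDdef
  set f : ℝ → ℝ := fun s => Real.arcsin ((2 * Real.cosh s - Real.cosh p - Real.cosh q) / D)
    with hf
  have hcont : Continuous f := by fun_prop
  have hderiv : ∀ s ∈ Set.Ioo p q, HasDerivAt f (Real.sinh s *
      (√((Real.cosh q - Real.cosh s) * (Real.cosh s - Real.cosh p)))⁻¹) s := by
    intro s hs
    have h1 : 0 < Real.cosh q - Real.cosh s :=
      sub_pos.2 (cosh_lt_cosh_of_nonneg (hp.trans hs.1.le) hs.2)
    have h2 : 0 < Real.cosh s - Real.cosh p := sub_pos.2 (cosh_lt_cosh_of_nonneg hp hs.1)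
    have hx : HasDerivAt (fun s => (2 * Real.cosh s - Real.cosh p - Real.cosh q) / D)
        (2 * Real.sinh s / D) s :=
      ((((Real.hasDerivAt_cosh s).const_mul 2).sub_const _).sub_const _).div_const D
    have ha := Real.hasDerivAt_arcsin
      (x := (2 * Real.cosh s - Real.cosh p - Real.cosh q) / D)
      (by rw [ne_eq, div_eq_iff hD.ne']; intro h; linarith)
      (by rw [ne_eq, div_eq_iff hD.ne']; intro h; linarith)
    have hsq : √(1 - ((2 * Real.cosh s - Real.cosh p - Real.cosh q) / D) ^ 2) =
        2 / D * √((Real.cosh q - Real.cosh s) * (Real.cosh s - Real.cosh p)) := by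
      rw [← Real.sqrt_sq (by positivity : 0 ≤ 2 / D), ← Real.sqrt_mul (by positivity)]
      congr 1
      field_simp
      rw [hDdef]
      ring
    have hpos : 0 < √((Real.cosh q - Real.cosh s) * (Real.cosh s - Real.cosh p)) :=
      Real.sqrt_pos.2 (mul_pos h1 h2)
    refine (ha.comp s hx).congr_deriv ?_
    rw [hsq]
    field_simp
  have hnonneg : ∀ s ∈ Set.Ioo p q, 0 ≤ Real.sinh s *
      (√((Real.cosh q - Real.cosh s) * (Real.cosh s - Real.cosh p)))⁻¹ := fun s hs =>
    mul_nonneg (Real.sinh_nonneg_iff.2 (hp.trans hs.1.le)) (by positivity)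
  have hint := intervalIntegral.integrableOn_deriv_of_nonneg hcont.continuousOn hderiv hnonneg
  refine ⟨hint.mono_set Set.Ioo_subset_Ioc_self, ?_⟩
  rw [← integral_Ioc_eq_integral_Ioo, ← intervalIntegral.integral_of_le hpq.le,
    integral_eq_sub_of_hasDerivAt_of_le hpq.le hcont.continuousOn hderiv
      ((intervalIntegrable_iff_integrableOn_Ioc_of_le hpq.le).2 hint)]
  have e1 : (2 * Real.cosh q - Real.cosh p - Real.cosh q) / D = 1 := by
    rw [div_eq_iff hD.ne']; ring
  have e2 : (2 * Real.cosh p - Real.cosh p - Real.cosh q) / D = -1 := by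
    rw [div_eq_iff hD.ne']; ring
  simp only [hf, e1, e2, Real.arcsin_one, Real.arcsin_neg_one]
  ring

lemma integrableOn_sinh_div_sqrt_cosh_sub (t : ℝ) :
    IntegrableOn (fun s => Real.sinh s * (√(Real.cosh t - Real.cosh s))⁻¹) (Set.Ioo 0 t) := by
  have hcont : Continuous fun s => -(2 * √(Real.cosh t - Real.cosh s)) := by fun_prop
  refine (intervalIntegral.integrableOn_deriv_of_nonneg hcont.continuousOn ?_ ?_).mono_set
    Set.Ioo_subset_Ioc_self
  · intro s hs
    have h1 : 0 < Real.cosh t - Real.cosh s :=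
      sub_pos.2 (cosh_lt_cosh_of_nonneg hs.1.le hs.2)
    refine ((((Real.hasDerivAt_cosh s).const_sub (Real.cosh t)).sqrt
      h1.ne').const_mul 2).neg.congr_deriv ?_
    have := Real.sqrt_pos.2 h1
    field_simp
  · exact fun s hs => mul_nonneg (Real.sinh_nonneg_iff.2 hs.1.le) (by positivity)

lemma cosh_add_sub_mul_symm (r s l : ℝ) :
    (Real.cosh (r + s) - Real.cosh l) * (Real.cosh l - Real.cosh (r - s)) =
      (Real.cosh (r + l) - Real.cosh s) * (Real.cosh s - Real.cosh (r - l)) := by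
  simp only [Real.cosh_add, Real.cosh_sub]
  linear_combination (Real.cosh l ^ 2 - Real.cosh s ^ 2) * Real.cosh_sq r
    - Real.sinh r ^ 2 * Real.cosh_sq s + Real.sinh r ^ 2 * Real.cosh_sq l

/-- The integrand defining `Isol`. -/
noncomputable def waveKernel (t r : ℝ) (φ : ℝ → ℝ) (s l : ℝ) : ℝ :=
  φ l * Real.sinh l * Real.sinh s *
    ((Real.cosh t - Real.cosh s) * (Real.cosh (r + s) - Real.cosh l) *
      (Real.cosh l - Real.cosh (r - s))) ^ (-(1 / 2) : ℝ)

/-- The domain of integration defining `Isol`, without its boundary. -/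
def waveDomain (t r : ℝ) : Set (ℝ × ℝ) :=
  {z | 0 < z.1 ∧ z.1 < t ∧ |r - z.1| < z.2 ∧ z.2 < r + z.1}

lemma waveKernel_nonneg {t r s l : ℝ} {φ : ℝ → ℝ} (hφ : ∀ x, 0 ≤ φ x)
    (hz : (s, l) ∈ waveDomain t r) : 0 ≤ waveKernel t r φ s l := by
  obtain ⟨h1, h2, h3, h4⟩ := hz
  dsimp only at h1 h2 h3 h4
  have hl : 0 ≤ l := (abs_nonneg _).trans h3.le
  have a1 := sub_pos.2 (cosh_lt_cosh_of_nonneg h1.le h2)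
  have a2 := sub_pos.2 (cosh_lt_cosh_of_nonneg hl h4)
  have a3 := sub_pos.2 (cosh_lt_cosh_of_nonneg (abs_nonneg _) h3)
  rw [Real.cosh_abs] at a3
  have := Real.sinh_nonneg_iff.2 hl
  have := Real.sinh_nonneg_iff.2 h1.le
  have := hφ l
  unfold waveKernel
  positivity

lemma waveKernel_eq {t r s l : ℝ} {φ : ℝ → ℝ} (hz : (s, l) ∈ waveDomain t r) :
    waveKernel t r φ s l = φ l * (Real.sinh s * (√(Real.cosh t - Real.cosh s))⁻¹) *
      (Real.sinh l *
        (√((Real.cosh (r + s) - Real.cosh l) * (Real.cosh l - Real.cosh |r - s|)))⁻¹) := by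
  obtain ⟨h1, h2, h3, h4⟩ := hz
  dsimp only at h1 h2 h3 h4
  have hl : 0 ≤ l := (abs_nonneg _).trans h3.le
  have a1 := sub_pos.2 (cosh_lt_cosh_of_nonneg h1.le h2)
  have a2 := sub_pos.2 (cosh_lt_cosh_of_nonneg hl h4)
  have a3 := sub_pos.2 (cosh_lt_cosh_of_nonneg (abs_nonneg _) h3)
  rw [Real.cosh_abs] at a3 ⊢
  unfold waveKernel
  rw [rpow_neg_half_eq_inv_sqrt (by positivity), mul_assoc (_ - _), Real.sqrt_mul a1.le, mul_inv]
  ring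

lemma le_waveKernel {t r s l : ℝ} {φ : ℝ → ℝ} (hφ : ∀ x, 0 ≤ φ x) (hr : 0 < r)
    (hz : (s, l) ∈ waveDomain t r) :
    φ l * Real.sinh l * (√(2 * Real.sinh r * Real.sinh l))⁻¹ * (Real.sinh s *
      (√((Real.cosh t - Real.cosh s) * (Real.cosh s - Real.cosh |r - l|)))⁻¹) ≤
      waveKernel t r φ s l := by
  obtain ⟨h1, h2, h3, h4⟩ := hz
  dsimp only at h1 h2 h3 h4
  obtain ⟨h3a, h3b⟩ := abs_lt.1 h3
  have hl : 0 < l := (abs_nonneg _).trans_lt h3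
  have a1 := sub_pos.2 (cosh_lt_cosh_of_nonneg h1.le h2)
  have a2 := sub_pos.2 (cosh_lt_cosh_of_nonneg h1.le (by linarith : s < r + l))
  have a3 := sub_pos.2 (cosh_lt_cosh_of_nonneg (abs_nonneg _)
    (abs_lt.2 ⟨by linarith, by linarith⟩ : |r - l| < s))
  rw [Real.cosh_abs] at a3 ⊢
  have b1 := Real.sinh_pos_iff.2 hl
  have b2 := Real.sinh_pos_iff.2 hr
  have b3 := Real.sinh_pos_iff.2 h1
  have b4 := hφ l
  have hle : Real.cosh (r + l) - Real.cosh s ≤ 2 * Real.sinh r * Real.sinh l := by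
    have : Real.cosh (r + l) - Real.cosh (r - l) = 2 * Real.sinh r * Real.sinh l := by
      rw [Real.cosh_add, Real.cosh_sub]; ring
    linarith
  unfold waveKernel
  rw [mul_assoc (_ - _), cosh_add_sub_mul_symm, rpow_neg_half_eq_inv_sqrt (by positivity),
    show (Real.cosh t - Real.cosh s) *
      ((Real.cosh (r + l) - Real.cosh s) * (Real.cosh s - Real.cosh (r - l))) =
      (Real.cosh (r + l) - Real.cosh s) *
      ((Real.cosh t - Real.cosh s) * (Real.cosh s - Real.cosh (r - l))) by ring,
    Real.sqrt_mul a2.le, mul_inv,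
    show φ l * Real.sinh l * Real.sinh s * ((√(Real.cosh (r + l) - Real.cosh s))⁻¹ *
      (√((Real.cosh t - Real.cosh s) * (Real.cosh s - Real.cosh (r - l))))⁻¹) =
      φ l * Real.sinh l * (√(Real.cosh (r + l) - Real.cosh s))⁻¹ * (Real.sinh s *
      (√((Real.cosh t - Real.cosh s) * (Real.cosh s - Real.cosh (r - l))))⁻¹) by ring]
  gcongr

lemma measurableSet_waveDomain (t r : ℝ) : MeasurableSet (waveDomain t r) := by
  refine IsOpen.measurableSet ?_
  refine (isOpen_lt continuous_const continuous_fst).inter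
    ((isOpen_lt continuous_fst continuous_const).inter ((isOpen_lt ?_ continuous_snd).inter
      (isOpen_lt continuous_snd ?_))) <;> fun_prop

/-- The integrand defining `Isol`, extended by zero outside the domain of integration. -/
noncomputable def waveDensity (t r : ℝ) (φ : ℝ → ℝ) (z : ℝ × ℝ) : ℝ :=
  (waveDomain t r).indicator (fun z => waveKernel t r φ z.1 z.2) z

lemma waveDensity_nonneg {φ : ℝ → ℝ} (hφ : ∀ x, 0 ≤ φ x) (t r : ℝ) (z : ℝ × ℝ) :
    0 ≤ waveDensity t r φ z :=
  Set.indicator_nonneg (fun _ hz => waveKernel_nonneg hφ hz) z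

lemma measurable_waveDensity {φ : ℝ → ℝ} (hφ : Continuous φ) (t r : ℝ) :
    Measurable (waveDensity t r φ) := by
  refine Measurable.indicator ?_ (measurableSet_waveDomain t r)
  unfold waveKernel
  have : Measurable φ := hφ.measurable
  exact Measurable.mul (by fun_prop) (Measurable.pow_const (by fun_prop) _)

lemma waveDensity_slice {t r s : ℝ} {φ : ℝ → ℝ} (hs : s ∈ Set.Ioo 0 t) :
    (fun l => waveDensity t r φ (s, l)) =
      (Set.Ioo |r - s| (r + s)).indicator (waveKernel t r φ s) := by
  funext l
  unfold waveDensity waveDomain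
  by_cases h : l ∈ Set.Ioo |r - s| (r + s)
  · rw [Set.indicator_of_mem h, Set.indicator_of_mem]
    exact ⟨hs.1, hs.2, h.1, h.2⟩
  · rw [Set.indicator_of_notMem h, Set.indicator_of_notMem]
    exact fun h' => h ⟨h'.2.2.1, h'.2.2.2⟩

lemma waveDensity_of_notMem {t r s : ℝ} {φ : ℝ → ℝ} (hs : s ∉ Set.Ioo 0 t) (l : ℝ) :
    waveDensity t r φ (s, l) = 0 :=
  Set.indicator_of_notMem (fun h => hs ⟨h.1, h.2.1⟩) _

lemma abs_sub_lt_add {r s : ℝ} (hr : 0 < r) (hs : 0 < s) : |r - s| < r + s :=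
  abs_lt.2 ⟨by linarith, by linarith⟩

lemma waveDensity_slice_bound {t r s M : ℝ} {φ : ℝ → ℝ} (hφ : Continuous φ)
    (hφ0 : ∀ x, 0 ≤ φ x) (hr : 0 < r) (hs : s ∈ Set.Ioo 0 t)
    (hM : ∀ l ∈ Set.Icc 0 (r + t), φ l ≤ M) :
    Integrable (fun l => waveDensity t r φ (s, l)) ∧
      ∫ l, waveDensity t r φ (s, l) ≤
        M * (Real.sinh s * (√(Real.cosh t - Real.cosh s))⁻¹) * Real.pi := by
  obtain ⟨hi, hv⟩ := integral_sinh_div_sqrt_cosh (abs_nonneg (r - s)) (abs_sub_lt_add hr hs.1)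
  have hbound : ∀ l ∈ Set.Ioo |r - s| (r + s), waveKernel t r φ s l ≤
      M * (Real.sinh s * (√(Real.cosh t - Real.cosh s))⁻¹) * (Real.sinh l *
        (√((Real.cosh (r + s) - Real.cosh l) * (Real.cosh l - Real.cosh |r - s|)))⁻¹) := by
    intro l hl
    have hl0 : 0 ≤ l := (abs_nonneg _).trans hl.1.le
    rw [waveKernel_eq ⟨hs.1, hs.2, hl.1, hl.2⟩]
    have := Real.sinh_nonneg_iff.2 hl0
    have := Real.sinh_nonneg_iff.2 hs.1.le
    gcongr
    exact hM l ⟨hl0, by linarith [hl.2, hs.2]⟩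
  have hmeas : Measurable fun l => waveDensity t r φ (s, l) :=
    (measurable_waveDensity hφ t r).comp measurable_prodMk_left
  have hint : Integrable (fun l => waveDensity t r φ (s, l)) := by
    refine ((integrable_indicator_iff measurableSet_Ioo).2 (hi.const_mul
      (M * (Real.sinh s * (√(Real.cosh t - Real.cosh s))⁻¹)))).mono' hmeas.aestronglyMeasurable
      (ae_of_all _ fun l => ?_)
    rw [Real.norm_of_nonneg (waveDensity_nonneg hφ0 t r _), congrFun (waveDensity_slice hs) l]
    by_cases h : l ∈ Set.Ioo |r - s| (r + s)
    · rw [Set.indicator_of_mem h, Set.indicator_of_mem h]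
      exact hbound l h
    · rw [Set.indicator_of_notMem h, Set.indicator_of_notMem h]
  refine ⟨hint, ?_⟩
  rw [waveDensity_slice hs] at hint ⊢
  rw [MeasureTheory.integral_indicator measurableSet_Ioo, ← hv, ← MeasureTheory.integral_const_mul]
  exact setIntegral_mono_on ((integrable_indicator_iff measurableSet_Ioo).1 hint)
    (hi.const_mul _) measurableSet_Ioo hbound

lemma integrable_waveDensity {r : ℝ} {φ : ℝ → ℝ} (hφ : Continuous φ)
    (hφ0 : ∀ x, 0 ≤ φ x) (t : ℝ) (hr : 0 < r) :
    Integrable (waveDensity t r φ) (volume.prod volume) := by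
  obtain ⟨M, hM⟩ := (isCompact_Icc (a := (0 : ℝ)) (b := r + t)).bddAbove_image hφ.continuousOn
  have hM' : ∀ l ∈ Set.Icc 0 (r + t), φ l ≤ M := fun l hl => hM (Set.mem_image_of_mem φ hl)
  have hmeas := measurable_waveDensity hφ t r
  refine (integrable_prod_iff hmeas.aestronglyMeasurable).2 ⟨ae_of_all _ fun s => ?_, ?_⟩
  · by_cases hs : s ∈ Set.Ioo 0 t
    · exact (waveDensity_slice_bound hφ hφ0 hr hs hM').1
    · simp only [waveDensity_of_notMem hs]
      exact integrable_zero _ _ _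
  · simp only [Real.norm_of_nonneg (waveDensity_nonneg hφ0 t r _)]
    refine ((integrable_indicator_iff measurableSet_Ioo).2
      (((integrableOn_sinh_div_sqrt_cosh_sub t).const_mul M).mul_const Real.pi)).mono'
      hmeas.stronglyMeasurable.integral_prod_right'.aestronglyMeasurable (ae_of_all _ fun s => ?_)
    rw [Real.norm_of_nonneg (integral_nonneg fun l => waveDensity_nonneg hφ0 t r _)]
    by_cases hs : s ∈ Set.Ioo 0 t
    · rw [Set.indicator_of_mem hs]
      exact (waveDensity_slice_bound hφ hφ0 hr hs hM').2
    · simp only [waveDensity_of_notMem hs, MeasureTheory.integral_zero,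
        Set.indicator_of_notMem hs, le_refl]

lemma Isol_eq_integral_waveDensity {t r : ℝ} (φ : ℝ → ℝ) (ht : 0 < t) (hr : 0 < r) :
    Isol t r φ = 1 / (Real.pi * √2) * ∫ s, ∫ l, waveDensity t r φ (s, l) := by
  unfold Isol
  congr 1
  rw [intervalIntegral.integral_of_le ht.le, integral_Ioc_eq_integral_Ioo,
    ← MeasureTheory.integral_indicator measurableSet_Ioo]
  congr 1
  funext s
  by_cases hs : s ∈ Set.Ioo 0 t
  · rw [Set.indicator_of_mem hs, waveDensity_slice hs,
      MeasureTheory.integral_indicator measurableSet_Ioo,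
      intervalIntegral.integral_of_le (abs_sub_lt_add hr hs.1).le, integral_Ioc_eq_integral_Ioo]
    rfl
  · simp only [waveDensity_of_notMem hs, MeasureTheory.integral_zero, Set.indicator_of_notMem hs]

lemma le_integral_waveDensity_left {t r l : ℝ} {φ : ℝ → ℝ} (hφ0 : ∀ x, 0 ≤ φ x) (hr : 0 < r)
    (hl : l ∈ Set.Ioo |t - r| (t + r)) (hint : Integrable fun s => waveDensity t r φ (s, l)) :
    φ l * Real.sinh l * (√(2 * Real.sinh r * Real.sinh l))⁻¹ * Real.pi ≤
      ∫ s, waveDensity t r φ (s, l) := by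
  obtain ⟨h1, h2⟩ := hl
  obtain ⟨h1a, h1b⟩ := abs_lt.1 h1
  have hlt : |r - l| < t := abs_lt.2 ⟨by linarith, by linarith⟩
  obtain ⟨hi, hv⟩ := integral_sinh_div_sqrt_cosh (abs_nonneg (r - l)) hlt
  rw [← hv, ← MeasureTheory.integral_const_mul,
    ← MeasureTheory.integral_indicator measurableSet_Ioo]
  refine integral_mono ((integrable_indicator_iff measurableSet_Ioo).2 (hi.const_mul _)) hint
    fun s => ?_
  by_cases hs : s ∈ Set.Ioo |r - l| t
  · have hz : (s, l) ∈ waveDomain t r := by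
      obtain ⟨h3, h4⟩ := abs_lt.1 hs.1
      exact ⟨(abs_nonneg _).trans_lt hs.1, hs.2,
        abs_lt.2 ⟨by dsimp only; linarith [hs.2], by dsimp only; linarith⟩,
        by dsimp only; linarith⟩
    rw [Set.indicator_of_mem hs]
    unfold waveDensity
    rw [Set.indicator_of_mem hz]
    exact le_waveKernel hφ0 hr hz
  · rw [Set.indicator_of_notMem hs]
    exact waveDensity_nonneg hφ0 t r _

lemma Isol_lower_bound_of_continuous {t r : ℝ} {φ : ℝ → ℝ} (hφ : Continuous φ)
    (hφ0 : ∀ x, 0 ≤ φ x) (ht : 0 < t) (hr : 0 < r) :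
    (1 / 2) / √(Real.sinh r) * ∫ l in |t - r|..(t + r), φ l * √(Real.sinh l) ≤
      Isol t r φ := by
  have hF := integrable_waveDensity hφ hφ0 t hr
  have hsr := Real.sqrt_pos.2 (Real.sinh_pos_iff.2 hr)
  rw [Isol_eq_integral_waveDensity φ ht hr,
    integral_integral_swap (f := fun s l => waveDensity t r φ (s, l)) hF]
  have hle : |t - r| < t + r := abs_sub_lt_add ht hr
  have hg : IntegrableOn (fun l => φ l * √(Real.sinh l)) (Set.Ioo |t - r| (t + r)) :=
    (Continuous.integrableOn_Icc (by fun_prop)).mono_set Set.Ioo_subset_Icc_self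
  have hmono : ∫ l, (Set.Ioo |t - r| (t + r)).indicator
      (fun l => Real.pi / (√2 * √(Real.sinh r)) * (φ l * √(Real.sinh l))) l ≤
      ∫ l, ∫ s, waveDensity t r φ (s, l) := by
    refine integral_mono_ae ((integrable_indicator_iff measurableSet_Ioo).2 (hg.const_mul _))
      hF.integral_prod_right ?_
    filter_upwards [hF.prod_left_ae] with l hl
    by_cases h : l ∈ Set.Ioo |t - r| (t + r)
    · rw [Set.indicator_of_mem h]
      refine le_trans (le_of_eq ?_) (le_integral_waveDensity_left hφ0 hr h hl)
      have hl0 := Real.sinh_pos_iff.2 ((abs_nonneg _).trans_lt h.1)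
      have hsl := Real.sqrt_pos.2 hl0
      rw [Real.sqrt_mul (by positivity), Real.sqrt_mul (by positivity)]
      field_simp
      rw [Real.sq_sqrt hl0.le]
    · rw [Set.indicator_of_notMem h]
      exact integral_nonneg fun s => waveDensity_nonneg hφ0 t r _
  rw [MeasureTheory.integral_indicator measurableSet_Ioo, MeasureTheory.integral_const_mul,
    ← integral_Ioc_eq_integral_Ioo,
    ← intervalIntegral.integral_of_le hle.le] at hmono
  refine le_trans (le_of_eq ?_) (mul_le_mul_of_nonneg_left hmono (by positivity))
  field_simp
  rw [Real.sq_sqrt (by norm_num), mul_comm]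

lemma Isol_congr {t r : ℝ} {φ ψ : ℝ → ℝ} (ht : 0 < t) (hr : 0 < r)
    (h : ∀ x, 0 ≤ x → φ x = ψ x) : Isol t r φ = Isol t r ψ := by
  rw [Isol_eq_integral_waveDensity φ ht hr, Isol_eq_integral_waveDensity ψ ht hr]
  congr 2
  funext s
  congr 1
  funext l
  refine congrFun (Set.indicator_congr fun z hz => ?_) _
  simp only [waveKernel, h z.2 ((abs_nonneg _).trans hz.2.2.1.le)]

theorem solution_lower_bound_small_domain (τ₀ : ℝ) (hτ₀ : 0 < τ₀) :
    ∃ C₀ : ℝ, 0 < C₀ ∧ C₀ ≤ 1 ∧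
      ∀ φ : ℝ → ℝ, ContinuousOn φ (Set.Ici 0) → (∀ x ∈ Set.Ici (0 : ℝ), 0 ≤ φ x) →
        ∀ t r : ℝ, 0 < t → τ₀ / 2 < r → τ₀ / 8 < |t - r| →
          Isol t r φ ≥
            (C₀ / Real.sqrt (Real.sinh r)) *
              ∫ l in |t - r|..(t + r), φ l * Real.sqrt (Real.sinh l) := by
  refine ⟨1 / 2, by norm_num, by norm_num, fun φ hφ hφ0 t r ht hr _ => ?_⟩
  have hr0 : 0 < r := by linarith
  set ψ : ℝ → ℝ := fun x => φ (max x 0) with hψ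
  have hψφ : ∀ x, 0 ≤ x → φ x = ψ x := fun x hx => by rw [hψ]; simp only [max_eq_left hx]
  have hψc : Continuous ψ :=
    hφ.comp_continuous (by fun_prop) fun x => Set.mem_Ici.2 (le_max_right _ _)
  have hint : ∫ l in |t - r|..(t + r), φ l * √(Real.sinh l) =
      ∫ l in |t - r|..(t + r), ψ l * √(Real.sinh l) := by
    refine intervalIntegral.integral_congr fun l hl => ?_
    rw [Set.uIcc_of_le (abs_sub_lt_add ht hr0).le] at hl
    simp only [hψφ l ((abs_nonneg _).trans hl.1)]
  rw [ge_iff_le, hint, Isol_congr ht hr0 hψφ]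
  exact Isol_lower_bound_of_continuous hψc (fun x => hφ0 _ (Set.mem_Ici.2 (le_max_right _ _))) ht hr0
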